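/- arXiv:math/0405590 — 2 statements merged into one kernel-verified Lean document; each statement's English description precedes it below -/
import Mathlib

section
/- For m > 1, every automorphism of B(m,m) has infinitely many twisted conjugacy classes; i.e., B(m,m) has property R_∞. -/
/-- The defining relation of the Baumslag-Solitar group `B(m,n)`:
`a⁻¹ bᵐ a = bⁿ`, where `a` is `FreeGroup.of false` and `b` is `FreeGroup.of true`. -/
def BSrel (m n : ℤ) : Set (FreeGroup Bool) :=
  {(FreeGroup.of false)⁻¹ * (FreeGroup.of true) ^ m * FreeGroup.of false *
    ((FreeGroup.of true) ^ n)⁻¹}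

/-- The Baumslag-Solitar group `B(m,n) = ⟨a, b | a⁻¹ bᵐ a = bⁿ⟩`. -/
abbrev BS (m n : ℤ) : Type := PresentedGroup (BSrel m n)

/-- The generator `a` of `B(m,n)`. -/
def BSa (m n : ℤ) : BS m n := PresentedGroup.of false

/-- The generator `b` of `B(m,n)`. -/
def BSb (m n : ℤ) : BS m n := PresentedGroup.of true

/-- Twisted conjugacy: `α` and `α'` are `φ`-conjugate if `α' = γ * α * φ(γ)⁻¹`
for some `γ`. -/
def twistedConj {G : Type*} [Group G] (φ : G →* G) (α α' : G) : Prop :=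
  ∃ γ : G, α' = γ * α * (φ γ)⁻¹

open LaurentPolynomial in
/-- Units of Laurent polynomials over a field are monomials. -/
theorem laurent_unit_aux {F : Type*} [Field F] (v w : LaurentPolynomial F) (h : v * w = 1) :
    ∃ (c : F) (k : ℤ), v = C c * T k := by
  obtain ⟨n, v', hv⟩ := exists_T_pow v
  obtain ⟨n', w', hw⟩ := exists_T_pow w
  have h1 : v' * w' = Polynomial.X ^ (n + n') := by
    apply Polynomial.toLaurent_injective
    rw [map_mul, hv, hw, Polynomial.toLaurent_X_pow]
    push_cast
    rw [T_add]
    linear_combination (T n * T n') * h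
  have h2 : v' ∣ Polynomial.X ^ (n + n') := ⟨w', h1.symm⟩
  obtain ⟨i, -, hi⟩ := (dvd_prime_pow Polynomial.prime_X _).1 h2
  obtain ⟨u, hu⟩ := hi.symm
  obtain ⟨c, -, hc⟩ := Polynomial.isUnit_iff.1 u.isUnit
  refine ⟨c, i - n, ?_⟩
  have h3 : v = (Polynomial.toLaurent v') * T (-n) := by
    rw [hv, mul_T_assoc]; simp
  rw [h3, ← hu, ← hc, map_mul, Polynomial.toLaurent_X_pow, Polynomial.toLaurent_C, T_sub]
  ring

theorem twistedConj_equivalence {G : Type*} [Group G] (φ : G →* G) :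
    Equivalence (twistedConj φ) where
  refl x := ⟨1, by simp⟩
  symm := by
    rintro x y ⟨g, rfl⟩
    exact ⟨g⁻¹, by simp [mul_assoc]⟩
  trans := by
    rintro x y z ⟨g, rfl⟩ ⟨h, rfl⟩
    exact ⟨h * g, by simp [mul_assoc]⟩

theorem infinite_quot_aux {G : Type*} [Group G] (φ : G →* G) (s : ℕ → G)
    (h : ∀ i j γ, s j = γ * s i * (φ γ)⁻¹ → i = j) : Infinite (Quot (twistedConj φ)) := by
  apply Infinite.of_injective (fun n => Quot.mk (twistedConj φ) (s n))
  intro i j hij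
  obtain ⟨γ, hγ⟩ := ((twistedConj_equivalence φ).quot_mk_eq_iff _ _).1 hij
  exact h i j γ hγ

open LaurentPolynomial in
theorem R_infty_core {G : Type*} [Group G] (p : ℕ) [Fact p.Prime] (a b : G) (m : ℤ) (hm : m ≠ 0)
    (ind : ∀ P : G → Prop, P 1 → P a → P b → (∀ x y, P x → P y → P (x * y)) →
      (∀ x, P x → P x⁻¹) → ∀ g, P g)
    (A B : G → ℤ) (f : G → LaurentPolynomial (ZMod p))
    (hA : ∀ x y, A (x * y) = A x + A y) (hAa : A a = 1) (hAb : A b = 0)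
    (hB : ∀ x y, B (x * y) = B x + B y) (hBa : B a = 0) (hBb : B b = 1)
    (hf : ∀ x y, f (x * y) = f x + T (A x) * f y) (hfa : f a = 0) (hfb : f b = 1)
    (hc : ∀ g, b ^ m * g = g * b ^ m) (φ : G ≃* G) :
    Infinite (Quot (twistedConj φ.toMonoidHom)) := by
  have hA1 : A 1 = 0 := by have := hA 1 1; simp at this; exact this
  have hB1 : B 1 = 0 := by have := hB 1 1; simp at this; exact this
  have hf1 : f 1 = 0 := by
    have := hf 1 1; rw [hA1] at this; simp at this; exact this
  have hAi : ∀ x, A x⁻¹ = - A x := fun x => by have := hA x x⁻¹; simp [hA1] at this; omega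
  have hBi : ∀ x, B x⁻¹ = - B x := fun x => by have := hB x x⁻¹; simp [hB1] at this; omega
  have hTT : ∀ n : ℤ, (T n : LaurentPolynomial (ZMod p)) * T (-n) = 1 := fun n => by
    rw [← T_add]; simp
  have hTinj : ∀ n : ℤ, (T n : LaurentPolynomial (ZMod p)) = 1 → n = 0 := by
    intro n hn
    have := congrArg (fun q => q.coeff 0) hn
    rw [← T_zero] at this
    simp only [T_apply] at this
    by_contra h
    simp [h] at this
  have hAn : ∀ x (n : ℕ), A (x ^ n) = n * A x := by
    intro x n
    induction n with
    | zero => simp [hA1]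
    | succ n ih => rw [pow_succ, hA, ih]; push_cast; ring
  have hAz : ∀ x (n : ℤ), A (x ^ n) = n * A x := by
    intro x n
    obtain ⟨k, rfl | rfl⟩ := n.eq_nat_or_neg
    · simpa using hAn x k
    · rw [zpow_neg, hAi, zpow_natCast, hAn]; ring
  -- the image of b has no a-exponent
  have hφb : A (φ b) = 0 := by
    have hz : φ b ^ m * b = b * φ b ^ m := by
      have := congrArg φ (hc (φ.symm b))
      simpa using this
    have h1 := congrArg f hz
    rw [hf, hf, hfb, hAb, T_zero] at h1
    have h2 : A (φ b ^ m) = 0 := by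
      apply hTinj
      linear_combination h1
    rw [hAz] at h2
    exact (mul_eq_zero.1 h2).resolve_left hm
  have hAφ : ∀ g, A (φ g) = A g * A (φ a) := by
    apply ind
    · simp [hA1]
    · simp [hAa]
    · simp [hAb, hφb]
    · intro x y hx hy
      rw [map_mul, hA, hA, hx, hy]; ring
    · intro x hx
      rw [map_inv, hAi, hAi, hx]; ring
  have hBφ : ∀ g, B (φ g) = A g * B (φ a) + B g * B (φ b) := by
    apply ind
    · simp [hA1, hB1]
    · simp [hAa, hBa]
    · simp [hAb, hBb]
    · intro x y hx hy
      rw [map_mul, hA, hB, hB, hx, hy]; ring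
    · intro x hx
      rw [map_inv, hAi, hBi, hBi, hx]; ring
  have hε : A (φ a) = 1 ∨ A (φ a) = -1 := by
    have := hAφ (φ.symm a)
    rw [φ.apply_symm_apply, hAa] at this
    exact Int.isUnit_iff.1 (IsUnit.of_mul_eq_one_right _ this.symm)
  have hA0 : A (φ.symm b) = 0 := by
    have := hAφ (φ.symm b)
    rw [φ.apply_symm_apply, hAb] at this
    rcases hε with h | h <;> rw [h] at this <;> omega
  have hδ : B (φ b) = 1 ∨ B (φ b) = -1 := by
    have := hBφ (φ.symm b)
    rw [φ.apply_symm_apply, hBb, hA0, zero_mul, zero_add] at this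
    exact Int.isUnit_iff.1 (IsUnit.of_mul_eq_one_right _ this.symm)
  rcases hε with hε | hε
  · -- case `A ∘ φ = A`
    apply infinite_quot_aux _ (fun n => a ^ n)
    intro i j γ h
    have := congrArg A h
    change _ = A (γ * a ^ i * (φ γ)⁻¹) at this
    simp only [hA, hAi, hAn, hAφ γ, hε, hAa] at this
    push_cast at this
    omega
  · have hd : ∀ g, (T (-1) - 1) * (f (φ g) - f (φ b) * invert (f g))
        = (T (-A g) - 1) * f (φ a) := by
      apply ind
      · simp [hA1, hf1]
      · simp [hAa, hfa]
      · simp [hAb, hfb]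
      · intro x y hx hy
        rw [map_mul, hf, hf, hA, hAφ, hε, map_add, map_mul, invert_T, neg_add, T_add]
        rw [show A x * -1 = - A x by ring]
        linear_combination hx + T (-A x) * hy
      · intro x hx
        have h0 : f (φ x) + T (-A x) * f (φ x)⁻¹ = 0 := by
          have := hf (φ x) (φ x)⁻¹
          rw [hAφ, hε, mul_inv_cancel, hf1, show A x * -1 = - A x by ring] at this
          exact this.symm
        have h1 : invert (f x) + T (-A x) * invert (f x⁻¹) = 0 := by
          have := hf x x⁻¹
          rw [mul_inv_cancel, hf1] at this
          have := congrArg invert this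
          rw [map_add, map_mul, invert_T, map_zero] at this
          exact this.symm
        rw [map_inv, hAi, neg_neg]
        linear_combination (-T (A x)) * hx + T (A x) * (T (-1) - 1) * h0
          - T (A x) * (T (-1) - 1) * f (φ b) * h1
          - ((T (-1) - 1) * (f (φ x)⁻¹ - f (φ b) * invert (f x⁻¹)) + f (φ a)) * hTT (A x)
    have hd0 : ∀ g, A g = 0 → f (φ g) = f (φ b) * invert (f g) := by
      intro g hg
      have := hd g
      rw [hg, neg_zero, T_zero, sub_self, zero_mul] at this
      rcases mul_eq_zero.1 this with h | h
      · have := hTinj (-1) (sub_eq_zero.1 h)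
        omega
      · exact sub_eq_zero.1 h
    have hunit : f (φ b) * invert (f (φ.symm b)) = 1 := by
      rw [← hd0 _ hA0, φ.apply_symm_apply, hfb]
    obtain ⟨c, k, hck⟩ := laurent_unit_aux _ _ hunit
    -- augmentation
    have haug : ∀ g, eval₂ (RingHom.id (ZMod p)) 1 (f g) = (B g : ZMod p) := by
      apply ind
      · simp [hf1, hB1]
      · simp [hfa, hBa]
      · simp [hfb, hBb]
      · intro x y hx hy
        rw [hf, hB, map_add, map_mul, hx, hy]; simp
      · intro x hx
        have := congrArg (eval₂ (RingHom.id (ZMod p)) 1) (hf x x⁻¹)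
        rw [mul_inv_cancel, hf1, map_add, map_mul, hx, map_zero] at this
        simp at this
        rw [hBi]
        push_cast
        linear_combination -this
    have hcc : c * c = 1 := by
      have h := haug (φ b)
      rw [hck] at h
      simp at h
      rw [h]
      rcases hδ with h | h <;> rw [h] <;> simp
    have hs : ∀ n : ℕ, f (a ^ n * b * (a ^ n)⁻¹) = T n ∧ A (a ^ n * b * (a ^ n)⁻¹) = 0 := by
      intro n
      have h0 : ∀ n : ℕ, f (a ^ n) = 0 := by
        intro n
        induction n with
        | zero => simp [hf1]
        | succ n ih => rw [pow_succ, hf, ih, hfa]; simp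
      have h1 : f (a ^ n)⁻¹ = 0 := by
        have := hf (a ^ n) (a ^ n)⁻¹
        rw [mul_inv_cancel, hf1, h0, zero_add] at this
        exact ((mul_eq_zero.1 this.symm).resolve_left (isUnit_T _).ne_zero)
      constructor
      · rw [hf, hf, h0, h1, hfb, hAn, hAa]; simp
      · rw [hA, hA, hAi, hAb]; ring
    apply infinite_quot_aux _ (fun n => a ^ (k.natAbs + 1 + n) * b * (a ^ (k.natAbs + 1 + n))⁻¹)
    intro i j γ h
    obtain ⟨hi1, hi2⟩ := hs (k.natAbs + 1 + i)
    obtain ⟨hj1, hj2⟩ := hs (k.natAbs + 1 + j)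
    generalize a ^ (k.natAbs + 1 + i) * b * (a ^ (k.natAbs + 1 + i))⁻¹ = x at *
    generalize a ^ (k.natAbs + 1 + j) * b * (a ^ (k.natAbs + 1 + j))⁻¹ = y at *
    change y = γ * x * (φ γ)⁻¹ at h
    have hγ : A γ = 0 := by
      have := congrArg A h
      rw [hA, hA, hAi, hAφ, hε, hi2, hj2] at this
      omega
    have hE : f y + f (φ γ) = f γ + f x := by
      have := congrArg f (show y * φ γ = γ * x by rw [h]; group)
      rw [hf, hf, hγ, hj2] at this
      simpa using this
    rw [hd0 γ hγ, hck, hi1, hj1] at hE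
    have key : ∀ (q : LaurentPolynomial (ZMod p)) (n : ℤ),
        (C c * T k * invert q).coeff n = c * q.coeff (k - n) := by
      intro q n
      induction q using LaurentPolynomial.induction_on' with
      | add q r hq hr =>
        rw [map_add, mul_add]
        simp only [AddMonoidAlgebra.coeff_add, Finsupp.add_apply, hq, hr]
        ring
      | C_mul_T l r =>
        rw [map_mul, invert_C, invert_T]
        rw [show C c * T k * (C r * T (-l)) = C (c * r) * T (k - l) by
          rw [T_sub, map_mul]; ring]
        rw [← single_eq_C_mul_T, ← single_eq_C_mul_T]
        simp only [AddMonoidAlgebra.coeff_single, Finsupp.single_apply]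
        by_cases hn : k - l = n
        · rw [if_pos hn, if_pos (by omega)]
        · rw [if_neg hn, if_neg (by omega), mul_zero]
    have e1 := congrArg (fun q => q.coeff ((k.natAbs + 1 + j : ℕ) : ℤ)) hE
    have e2 := congrArg (fun q => q.coeff (k - ((k.natAbs + 1 + j : ℕ) : ℤ))) hE
    simp only [AddMonoidAlgebra.coeff_add, Finsupp.add_apply, key, T_apply] at e1 e2
    rw [sub_sub_cancel] at e2
    by_contra hij
    rw [if_pos trivial, if_neg (by omega)] at e1
    rw [if_neg (by omega), if_neg (by omega)] at e2
    have : (1 : ZMod p) = 0 := by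
      linear_combination e1 + c * e2 - (f γ).coeff ((k.natAbs + 1 + j : ℕ) : ℤ) * hcc
    exact one_ne_zero this

/-- The lamplighter-type group `R[T;T⁻¹] ⋊ ℤ`. -/
@[ext]
structure LampGrp (R : Type*) [CommRing R] where
  /-- the Laurent polynomial part -/
  pol : LaurentPolynomial R
  /-- the shift part -/
  shift : ℤ

namespace LampGrp
open LaurentPolynomial

variable {R : Type*} [CommRing R]

noncomputable instance : Mul (LampGrp R) := ⟨fun x y => ⟨x.pol + T x.shift * y.pol, x.shift + y.shift⟩⟩
noncomputable instance : One (LampGrp R) := ⟨⟨0, 0⟩⟩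
noncomputable instance : Inv (LampGrp R) := ⟨fun x => ⟨-(T (-x.shift) * x.pol), -x.shift⟩⟩

theorem mul_def (x y : LampGrp R) :
    x * y = ⟨x.pol + T x.shift * y.pol, x.shift + y.shift⟩ := rfl
theorem one_def : (1 : LampGrp R) = ⟨0, 0⟩ := rfl
theorem inv_def (x : LampGrp R) : x⁻¹ = ⟨-(T (-x.shift) * x.pol), -x.shift⟩ := rfl

noncomputable instance : Group (LampGrp R) := Group.ofLeftAxioms
  (by
    intro x y z
    simp only [mul_def, T_add]
    ext1
    · simp only; ring
    · simp only; ring)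
  (by intro x; simp [mul_def, one_def])
  (by intro x; simp [mul_def, one_def, inv_def])

theorem b_pow (n : ℕ) : (⟨1, 0⟩ : LampGrp R) ^ n = ⟨n, 0⟩ := by
  induction n with
  | zero => simp [one_def]
  | succ n ih => rw [pow_succ, ih]; simp [mul_def]

end LampGrp

/-- For `m > 1`, every automorphism of `B(m,m)` has infinitely many twisted conjugacy
classes; i.e. `B(m,m)` has property `R∞`. -/
theorem BS_m_m_R_infty (m : ℤ) (hm : 1 < m) (φ : BS m m ≃* BS m m) :
    Infinite (Quot (twistedConj φ.toMonoidHom)) := by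
  lift m to ℕ using by omega
  obtain ⟨p, hp, hpm⟩ := Nat.exists_prime_and_dvd (n := m) (by omega)
  have : Fact p.Prime := ⟨hp⟩
  let FA : BS m m →* Multiplicative ℤ := PresentedGroup.toGroup
    (f := fun x : Bool => if x then Multiplicative.ofAdd (0 : ℤ) else Multiplicative.ofAdd 1) (by
      rintro r rfl
      simp)
  let FB : BS m m →* Multiplicative ℤ := PresentedGroup.toGroup
    (f := fun x : Bool => if x then Multiplicative.ofAdd (1 : ℤ) else Multiplicative.ofAdd 0) (by
      rintro r rfl
      simp)
  have hmp : (m : LaurentPolynomial (ZMod p)) = 0 := by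
    have h : (m : ZMod p) = 0 := (ZMod.natCast_eq_zero_iff _ _).2 hpm
    have := congrArg LaurentPolynomial.C h
    simpa using this
  let F : BS m m →* LampGrp (ZMod p) := PresentedGroup.toGroup
    (f := fun x : Bool => if x then (⟨1, 0⟩ : LampGrp (ZMod p)) else ⟨0, 1⟩) (by
      rintro r rfl
      simp only [map_mul, map_inv, map_pow, FreeGroup.lift_apply_of, zpow_natCast]
      simp only [if_true, LampGrp.b_pow, hmp]
      rw [← LampGrp.one_def]
      simp)
  have hFAa : FA (BSa m m) = Multiplicative.ofAdd 1 := by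
    simp [FA, BSa]
  have hFAb : FA (BSb m m) = Multiplicative.ofAdd 0 := by
    simp [FA, BSb]
  have hFBa : FB (BSa m m) = Multiplicative.ofAdd 0 := by
    simp [FB, BSa]
  have hFBb : FB (BSb m m) = Multiplicative.ofAdd 1 := by
    simp [FB, BSb]
  have hFa : F (BSa m m) = ⟨0, 1⟩ := by
    simp [F, BSa]
  have hFb : F (BSb m m) = ⟨1, 0⟩ := by
    simp [F, BSb]
  have ind : ∀ P : BS m m → Prop, P 1 → P (BSa m m) → P (BSb m m) →
      (∀ x y, P x → P y → P (x * y)) → (∀ x, P x → P x⁻¹) → ∀ g, P g := by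
    intro P h1 ha hb hmul hinv g
    have hg : g ∈ Subgroup.closure (Set.range (PresentedGroup.of (rels := BSrel m m))) := by
      rw [PresentedGroup.closure_range_of]; trivial
    induction hg using Subgroup.closure_induction with
    | mem x hx =>
      obtain ⟨i, rfl⟩ := hx
      cases i
      · exact ha
      · exact hb
    | one => exact h1
    | mul x y _ _ hx hy => exact hmul x y hx hy
    | inv x _ hx => exact hinv x hx
  have hrel : (BSa m m)⁻¹ * BSb m m ^ (m : ℤ) * BSa m m * (BSb m m ^ (m : ℤ))⁻¹ = 1 :=
    PresentedGroup.one_of_mem (rels := BSrel m m) rfl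
  have hshift : ∀ g, (F g).shift = (FA g).toAdd := by
    apply ind
    · simp [LampGrp.one_def]
    · simp [hFa, hFAa]
    · simp [hFb, hFAb]
    · intro x y hx hy
      rw [map_mul, map_mul, LampGrp.mul_def, toAdd_mul, ← hx, ← hy]
    · intro x hx
      rw [map_inv, map_inv, LampGrp.inv_def, toAdd_inv, ← hx]
  have hcent : ∀ g, BSb m m ^ (m : ℤ) * g = g * BSb m m ^ (m : ℤ) := by
    apply ind (fun g => Commute (BSb m m ^ (m : ℤ)) g)
    · exact Commute.one_right _
    · have h := mul_inv_eq_one.1 hrel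
      rw [mul_assoc, inv_mul_eq_iff_eq_mul] at h
      exact h
    · exact (Commute.refl _).zpow_left _
    · intro x y hx hy
      exact hx.mul_right hy
    · intro x hx
      exact hx.inv_right
  exact R_infty_core p (BSa m m) (BSb m m) m (by omega) ind
    (fun g => (FA g).toAdd) (fun g => (FB g).toAdd) (fun g => (F g).pol)
    (by intro x y; simp) (by simp [hFAa]) (by simp [hFAb])
    (by intro x y; simp) (by simp [hFBa]) (by simp [hFBb])
    (by intro x y; simp only [map_mul, LampGrp.mul_def, hshift]) (by simp [hFa]) (by simp [hFb])
    hcent φ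
end

section
/- Let 1 < m < |n|. Every injective endomorphism of B(m,n) has infinitely many twisted conjugacy classes. In particular, the induced endomorphism on the quotient ℤ (from the exact sequence 0 → K → B(m,n) → ℤ → 1 given by the a-exponent sum) must be the identity. -/
namespace BSproof

open HNNExtension HNNExtension.NormalWord

variable {G : Type*} [Group G] {A B : Subgroup G} (φ : A ≃* B)

/-- The product of a list of syllables. -/
def P (l : List (ℤˣ × G)) : HNNExtension G A B φ :=
  (l.map (fun x => t ^ (x.1 : ℤ) * of x.2)).prod

theorem P_append (l l' : List (ℤˣ × G)) : P φ (l ++ l') = P φ l * P φ l' := by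
  simp [P]

theorem P_cons (x : ℤˣ × G) (l : List (ℤˣ × G)) :
    P φ (x :: l) = t ^ (x.1 : ℤ) * of x.2 * P φ l := by
  simp [P]

theorem P_flatten (k : ℕ) (l : List (ℤˣ × G)) :
    P φ (List.replicate k l).flatten = P φ l ^ k := by
  induction k with
  | zero => simp [P]
  | succ k ih => rw [pow_succ', List.replicate_succ, List.flatten_cons, P_append, ih]

/-- The reducedness relation. -/
def R (A B : Subgroup G) : (ℤˣ × G) → (ℤˣ × G) → Prop :=
  fun a b => a.2 ∈ toSubgroup A B a.1 → a.1 = b.1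

theorem shorten (x y : ℤˣ × G) (h : ¬ R A B x y) :
    ∃ g : G, P φ [x, y] = of g := by
  obtain ⟨u, a⟩ := x
  obtain ⟨v, b⟩ := y
  simp only [R, Classical.not_imp] at h
  obtain ⟨h1, h2⟩ := h
  rcases Int.units_eq_one_or u with rfl | rfl <;> rcases Int.units_eq_one_or v with rfl | rfl
  · exact absurd rfl h2
  · refine ⟨φ ⟨a, h1⟩ * b, ?_⟩
    rw [map_mul, equiv_eq_conj]
    simp [P, mul_assoc]
  · refine ⟨φ.symm ⟨a, h1⟩ * b, ?_⟩
    rw [map_mul, equiv_symm_eq_conj]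
    simp [P, mul_assoc]
  · exact absurd rfl h2

theorem cyc (β : HNNExtension G A B φ) :
    (∃ c, ∃ g : G, c * β * c⁻¹ = of g) ∨
    ∃ c, ∃ l : List (ℤˣ × G), l ≠ [] ∧ c * β * c⁻¹ = P φ l ∧
      ∀ k, List.IsChain (R A B) (List.replicate k l).flatten := by
  classical
  let Q : ℕ → Prop := fun k => ∃ c, ∃ g : G, ∃ l : List (ℤˣ × G), l.length = k ∧
    c * β * c⁻¹ = of g * P φ l
  have hQ : ∃ k, Q k := by
    obtain ⟨d⟩ := TransversalPair.nonempty G A B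
    let w : NormalWord d := β • (NormalWord.empty : NormalWord d)
    refine ⟨w.toList.length, 1, w.head, w.toList, rfl, ?_⟩
    have : w.prod φ = β := by simp [w]
    rw [one_mul, inv_one, mul_one, ← this]
    rfl
  have hmin : ∀ c g l, c * β * c⁻¹ = of g * P φ l → Nat.find hQ ≤ l.length :=
    fun c g l h => Nat.find_min' hQ ⟨c, g, l, rfl, h⟩
  obtain ⟨c, g, l, hl, h⟩ := Nat.find_spec hQ
  rcases List.eq_nil_or_concat l with rfl | ⟨l', ⟨u, a⟩, rfl⟩
  · left
    exact ⟨c, g, by simpa [P] using h⟩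
  right
  have key : ∀ c' x y q, c' * β * c'⁻¹ = P φ (x :: y :: q) →
      q.length + 2 = Nat.find hQ → R A B x y := by
    intro c' x y q h' hq
    by_contra hR
    obtain ⟨g', hg'⟩ := shorten φ x y hR
    have : x :: y :: q = [x, y] ++ q := rfl
    rw [this, P_append, hg'] at h'
    have := hmin _ _ _ h'
    omega
  set l2 := l' ++ [(u, a * g)] with hl2
  have hlen : l2.length = Nat.find hQ := by rw [← hl]; simp [hl2]
  have hβ : ((of g)⁻¹ * c) * β * ((of g)⁻¹ * c)⁻¹ = P φ l2 := by
    have : ((of g)⁻¹ * c) * β * ((of g)⁻¹ * c)⁻¹ = (of g)⁻¹ * (c * β * c⁻¹) * of g := by group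
    rw [this, h, hl2]
    simp [P, mul_assoc]
  have hrot : ∀ c' p q, c' * β * c'⁻¹ = P φ (p ++ q) →
      ((P φ p)⁻¹ * c') * β * ((P φ p)⁻¹ * c')⁻¹ = P φ (q ++ p) := by
    intro c' p q h'
    have : ((P φ p)⁻¹ * c') * β * ((P φ p)⁻¹ * c')⁻¹ = (P φ p)⁻¹ * (c' * β * c'⁻¹) * P φ p := by
      group
    rw [this, h', P_append, P_append]
    group
  refine ⟨_, l2, by simp [hl2], hβ, ?_⟩
  have hch : List.IsChain (R A B) l2 := by
    rw [List.isChain_iff_forall_rel_of_append_cons_cons]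
    intro x y p q hpq
    rw [hpq] at hβ hlen
    refine key _ x y (q ++ p) (hrot _ p (x :: y :: q) hβ) ?_
    rw [← hlen]; simp; omega
  have hwrap : ∀ x ∈ l2.getLast?, ∀ y ∈ l2.head?, R A B x y := by
    intro x hx y hy
    have hx' : x = (u, a * g) := by simpa [hl2, eq_comm] using hx
    rcases l' with _ | ⟨z, p⟩
    · have hy' : y = (u, a * g) := by simpa [hl2, eq_comm] using hy
      subst hx' hy'
      exact fun _ => rfl
    · have hy' : y = z := by simpa [hl2, eq_comm] using hy
      subst hy'
      rw [← hx'] at hl2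
      rw [hl2] at hβ hlen
      refine key _ x y p (hrot _ (y :: p) [x] hβ) ?_
      rw [← hlen]; simp
  intro k
  rw [List.isChain_flatten]
  · refine ⟨?_, List.isChain_replicate_of_rel _ hwrap⟩
    intro m hm
    rw [List.eq_of_mem_replicate hm]
    exact hch
  · intro hm
    have := List.eq_of_mem_replicate hm
    simp [hl2] at this

/-- The number of stable letters in the normal form. -/
noncomputable def len (d : TransversalPair G A B) (g : HNNExtension G A B φ) : ℕ :=
  (g • (NormalWord.empty : NormalWord d)).toList.length

theorem len_P (d : TransversalPair G A B) (l : List (ℤˣ × G)) (h : List.IsChain (R A B) l) :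
    len φ d (P φ l) = l.length := by
  obtain ⟨w', h1, h2, -⟩ := ReducedWord.exists_normalWord_prod_eq φ d ⟨1, l, h⟩
  have : P φ l = w'.prod φ := by rw [h1]; simp [ReducedWord.prod, P]
  rw [len, this, prod_smul_empty]
  simpa using congrArg List.length h2

theorem unitsSMul_length (d : TransversalPair G A B) (u : ℤˣ) (w : NormalWord d) :
    (unitsSMul φ u w).toList.length ≤ w.toList.length + 1 := by
  rw [unitsSMul]
  split_ifs with hcan
  · cases w using consRecOn
    · simp [Cancels] at hcan
    · simp [unitsSMulWithCancel]; omega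
  · simp

theorem P_smul_length (d : TransversalPair G A B) (l : List (ℤˣ × G)) (w : NormalWord d) :
    (P φ l • w).toList.length ≤ l.length + w.toList.length := by
  induction l with
  | nil => simp [P]
  | cons x l ih =>
    rw [P_cons, mul_smul, mul_smul, t_pow_smul_eq_unitsSMul, of_smul_eq_smul]
    refine (unitsSMul_length φ d _ _).trans ?_
    simp only [group_smul_toList, List.length_cons]
    omega

theorem len_mul (d : TransversalPair G A B) (x y : HNNExtension G A B φ) :
    len φ d (x * y) ≤ len φ d x + len φ d y := by
  have hx : x = of (x • (NormalWord.empty : NormalWord d)).head *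
      P φ (x • (NormalWord.empty : NormalWord d)).toList := by
    have : (x • (NormalWord.empty : NormalWord d)).prod φ = x := by simp
    nth_rewrite 1 [← this]
    rfl
  unfold len
  rw [mul_smul]
  nth_rewrite 1 [hx]
  rw [mul_smul, of_smul_eq_smul, group_smul_toList]
  exact P_smul_length φ d _ _

theorem elliptic (α β : HNNExtension G A B φ) (p q : ℕ) (hpq : p < q)
    (h : α⁻¹ * β ^ p * α = β ^ q) : ∃ c, ∃ g : G, c * β * c⁻¹ = of g := by
  rcases cyc φ β with h1 | ⟨c, l, hl, hc, hch⟩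
  · exact h1
  exfalso
  obtain ⟨d⟩ := TransversalPair.nonempty G A B
  have hpow : ∀ k, len φ d (P φ l ^ k) = k * l.length := by
    intro k
    rw [← P_flatten, len_P φ d _ (hch k)]
    simp
  set α' := c * α * c⁻¹ with hα'
  have h' : α'⁻¹ * P φ l ^ p * α' = P φ l ^ q := by
    rw [← hc, conj_pow, conj_pow, ← h, hα']
    group
  have hk : ∀ k, α'⁻¹ * P φ l ^ (p * k) * α' = P φ l ^ (q * k) := by
    intro k
    rw [pow_mul, pow_mul, ← h']
    have := conj_pow (i := k) (a := α'⁻¹) (b := P φ l ^ p)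
    rw [inv_inv] at this
    exact this.symm
  have hb : ∀ k, q * k * l.length ≤ len φ d α'⁻¹ + p * k * l.length + len φ d α' := by
    intro k
    rw [← hpow, ← hpow, ← hk]
    exact (len_mul φ d _ _).trans (Nat.add_le_add_right (len_mul φ d _ _) _)
  have hL : 1 ≤ l.length := List.length_pos_iff.2 hl
  set X := len φ d α'⁻¹ + len φ d α' with hX
  have := hb (X + 1)
  have h2 : (p + 1) * ((X + 1) * l.length) ≤ q * ((X + 1) * l.length) :=
    Nat.mul_le_mul_right _ hpq
  nlinarith

end BSproof

namespace BSproof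

theorem BS_rel (m n : ℤ) : (BSa m n)⁻¹ * BSb m n ^ m * BSa m n = BSb m n ^ n := by
  have := PresentedGroup.one_of_mem (rels := BSrel m n) (Set.mem_singleton _)
  simp only [map_mul, map_inv, map_zpow] at this
  exact mul_inv_eq_one.1 this

/-- Universal property of `BS m n`. -/
def BSlift {H : Type*} [Group H] (m n : ℤ) (x y : H) (h : x⁻¹ * y ^ m * x = y ^ n) :
    BS m n →* H :=
  PresentedGroup.toGroup (f := fun i : Bool => if i then y else x) (by
    intro r hr
    rw [BSrel, Set.mem_singleton_iff] at hr
    subst hr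
    simp [h])

theorem BSlift_a {H : Type*} [Group H] (m n : ℤ) (x y : H) (h : x⁻¹ * y ^ m * x = y ^ n) :
    BSlift m n x y h (BSa m n) = x := by
  simp [BSlift, BSa]

theorem BSlift_b {H : Type*} [Group H] (m n : ℤ) (x y : H) (h : x⁻¹ * y ^ m * x = y ^ n) :
    BSlift m n x y h (BSb m n) = y := by
  simp [BSlift, BSb]

theorem BS_hom_ext {H : Type*} [Group H] {m n : ℤ} {f g : BS m n →* H}
    (ha : f (BSa m n) = g (BSa m n)) (hb : f (BSb m n) = g (BSb m n)) : f = g := by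
  apply PresentedGroup.ext
  rintro (_ | _)
  · exact ha
  · exact hb

theorem zpow_inj (k : ℤ) (hk : k ≠ 0) :
    Function.Injective (zpowGroupHom k : Multiplicative ℤ →* Multiplicative ℤ) := by
  intro x y h
  have h' : k * x.toAdd = k * y.toAdd := by
    simpa using congrArg Multiplicative.toAdd h
  exact Multiplicative.toAdd.injective (mul_left_cancel₀ hk h')

/-- The gluing isomorphism `⟨bⁿ⟩ ≃ ⟨bᵐ⟩`. -/
noncomputable def glue (m n : ℤ) (hm : m ≠ 0) (hn : n ≠ 0) :
    (zpowGroupHom n : Multiplicative ℤ →* Multiplicative ℤ).range ≃*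
    (zpowGroupHom m : Multiplicative ℤ →* Multiplicative ℤ).range :=
  (MonoidHom.ofInjective (zpow_inj n hn)).symm.trans (MonoidHom.ofInjective (zpow_inj m hm))

theorem glue_apply (m n : ℤ) (hm : m ≠ 0) (hn : n ≠ 0) (x : Multiplicative ℤ) :
    ((glue m n hm hn ⟨x ^ n, x, rfl⟩ :) : Multiplicative ℤ) = x ^ m := by
  have : (⟨x ^ n, x, rfl⟩ : (zpowGroupHom n : Multiplicative ℤ →* Multiplicative ℤ).range) =
      MonoidHom.ofInjective (zpow_inj n hn) x := rfl
  rw [this, glue, MulEquiv.trans_apply, MulEquiv.symm_apply_apply]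
  rfl

/-- From the presented group to the HNN extension. -/
noncomputable def toHNN (m n : ℤ) (hm : m ≠ 0) (hn : n ≠ 0) :
    BS m n →* HNNExtension (Multiplicative ℤ) _ _ (glue m n hm hn) :=
  BSlift m n HNNExtension.t (HNNExtension.of (Multiplicative.ofAdd 1)) (by
    have h := HNNExtension.t_mul_of (φ := glue m n hm hn)
      ⟨(Multiplicative.ofAdd 1) ^ n, Multiplicative.ofAdd 1, rfl⟩
    rw [glue_apply] at h
    rw [← map_zpow HNNExtension.of, ← map_zpow HNNExtension.of, mul_assoc, ← h, inv_mul_cancel_left])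

/-- From the HNN extension to the presented group. -/
noncomputable def ofHNN (m n : ℤ) (hm : m ≠ 0) (hn : n ≠ 0) :
    HNNExtension (Multiplicative ℤ) _ _ (glue m n hm hn) →* BS m n :=
  HNNExtension.lift (zpowersHom _ (BSb m n)) (BSa m n) (by
    rintro ⟨_, x, rfl⟩
    have := glue_apply m n hm hn x
    simp only [zpowGroupHom_apply] at this ⊢
    rw [this, map_zpow, map_zpow]
    simp only [zpowersHom_apply]
    rw [← zpow_mul, ← zpow_mul, mul_comm _ n, mul_comm _ m, zpow_mul, zpow_mul, ← BS_rel]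
    have := conj_zpow (i := Multiplicative.toAdd x) (a := (BSa m n)⁻¹) (b := BSb m n ^ m)
    rw [inv_inv] at this
    rw [this]
    group)

theorem ofHNN_toHNN (m n : ℤ) (hm : m ≠ 0) (hn : n ≠ 0) (x : BS m n) :
    ofHNN m n hm hn (toHNN m n hm hn x) = x := by
  have : (ofHNN m n hm hn).comp (toHNN m n hm hn) = MonoidHom.id _ := by
    apply BS_hom_ext
    · simp [toHNN, ofHNN, BSlift_a]
    · simp [toHNN, ofHNN, BSlift_b]
  exact DFunLike.congr_fun this x

/-- An element `β` with `α⁻¹ βᵐ α = βⁿ` is conjugate to a power of `b`. -/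
theorem conj_power (m n : ℤ) (hm : 1 < m) (hn : m < |n|) (α β : BS m n)
    (h : α⁻¹ * β ^ m * α = β ^ n) : ∃ c, ∃ k : ℤ, c * β * c⁻¹ = BSb m n ^ k := by
  have hm0 : m ≠ 0 := by omega
  have hn0 : n ≠ 0 := by rintro rfl; simp at hn; omega
  have h2 : (α ^ 2)⁻¹ * β ^ (m.natAbs ^ 2) * α ^ 2 = β ^ (n.natAbs ^ 2) := by
    have e : ∀ k : ℤ, β ^ (k.natAbs ^ 2) = β ^ (k * k) := by
      intro k
      rw [← zpow_natCast]
      congr 1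
      push_cast
      rw [sq_abs, sq]
    have c : ∀ (x : BS m n) (i : ℤ), (α⁻¹ * x * α) ^ i = α⁻¹ * x ^ i * α := by
      intro x i
      have := conj_zpow (i := i) (a := α⁻¹) (b := x)
      rwa [inv_inv] at this
    rw [e, e]
    calc (α ^ 2)⁻¹ * β ^ (m * m) * α ^ 2 = α⁻¹ * (α⁻¹ * (β ^ m) ^ m * α) * α := by
          rw [← zpow_mul, sq]; simp only [mul_inv_rev, mul_assoc]
      _ = α⁻¹ * (β ^ n) ^ m * α := by rw [← c, h]
      _ = α⁻¹ * (β ^ m) ^ n * α := by rw [← zpow_mul, ← zpow_mul, mul_comm]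
      _ = (β ^ n) ^ n := by rw [← c, h]
      _ = _ := by rw [← zpow_mul]
  have hlt : m.natAbs ^ 2 < n.natAbs ^ 2 := by
    apply Nat.pow_lt_pow_left _ two_ne_zero
    rw [Int.abs_eq_natAbs] at hn
    omega
  obtain ⟨c, g, hc⟩ := elliptic (glue m n hm0 hn0) (toHNN m n hm0 hn0 (α ^ 2))
    (toHNN m n hm0 hn0 β) _ _ hlt (by rw [← map_inv, ← map_pow, ← map_mul, ← map_mul, h2, map_pow])
  refine ⟨ofHNN m n hm0 hn0 c, Multiplicative.toAdd g, ?_⟩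
  have := congrArg (ofHNN m n hm0 hn0) hc
  rw [map_mul, map_mul, map_inv, ofHNN_toHNN] at this
  rw [this]
  simp [ofHNN]

/-- The affine action on `ℚ`. -/
noncomputable def aff (m n : ℤ) (hm : m ≠ 0) (hn : n ≠ 0) : BS m n →* Equiv.Perm ℚ :=
  BSlift m n (Equiv.mulLeft₀ ((m : ℚ) / n) (by positivity)) (Equiv.addRight (1 : ℚ)) (by
    have hm' : (m : ℚ) ≠ 0 := by exact_mod_cast hm
    have hn' : (n : ℚ) ≠ 0 := by exact_mod_cast hn
    rw [mul_assoc, inv_mul_eq_iff_eq_mul]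
    ext x
    simp only [Equiv.Perm.mul_apply]
    simp
    field_simp)

theorem aff_b (m n : ℤ) (hm : m ≠ 0) (hn : n ≠ 0) (k : ℤ) (x : ℚ) :
    aff m n hm hn (BSb m n ^ k) x = x + k := by
  rw [map_zpow, aff, BSlift_b]
  simp

theorem aff_sub (m n : ℤ) (hm : m ≠ 0) (hn : n ≠ 0) (π : BS m n →* Multiplicative ℤ)
    (ha : π (BSa m n) = Multiplicative.ofAdd 1) (hb : π (BSb m n) = 1) (g : BS m n) :
    ∀ x y : ℚ, aff m n hm hn g x - aff m n hm hn g y =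
      ((m : ℚ) / n) ^ (Multiplicative.toAdd (π g)) * (x - y) := by
  have hr : ((m : ℚ) / n) ≠ 0 := by positivity
  let S : Subgroup (BS m n) :=
    { carrier := {g | ∀ x y : ℚ, aff m n hm hn g x - aff m n hm hn g y =
        ((m : ℚ) / n) ^ (Multiplicative.toAdd (π g)) * (x - y)}
      one_mem' := by intro x y; simp
      mul_mem' := by
        intro a b h1 h2 x y
        rw [map_mul, Equiv.Perm.mul_apply, Equiv.Perm.mul_apply, h1, h2, map_mul, toAdd_mul,
          zpow_add₀ hr]
        ring
      inv_mem' := by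
        intro a h x y
        have := h (aff m n hm hn a⁻¹ x) (aff m n hm hn a⁻¹ y)
        simp only [map_inv, ← Equiv.Perm.mul_apply, mul_inv_cancel, Equiv.Perm.one_apply] at this
        rw [map_inv, map_inv, toAdd_inv, zpow_neg, this, inv_mul_cancel_left₀ (zpow_ne_zero _ hr)] }
  refine PresentedGroup.generated_by _ S ?_ g
  rintro (_ | _)
  · intro x y
    change aff m n hm hn (BSa m n) x - aff m n hm hn (BSa m n) y =
      ((m : ℚ) / n) ^ (Multiplicative.toAdd (π (BSa m n))) * (x - y)
    rw [ha, aff, BSlift_a]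
    simp
    ring
  · intro x y
    change aff m n hm hn (BSb m n) x - aff m n hm hn (BSb m n) y =
      ((m : ℚ) / n) ^ (Multiplicative.toAdd (π (BSb m n))) * (x - y)
    rw [hb, aff, BSlift_b]
    simp

theorem b_ne_one (m n : ℤ) (hm : m ≠ 0) (hn : n ≠ 0) : BSb m n ≠ 1 := by
  intro h
  have := aff_b m n hm hn 1 0
  rw [h] at this
  simp at this

theorem induced (m n : ℤ) (hm : 1 < m) (hn : m < |n|)
    (φ : BS m n →* BS m n) (hφ : Function.Injective φ) (π : BS m n →* Multiplicative ℤ)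
    (ha : π (BSa m n) = Multiplicative.ofAdd 1) (hb : π (BSb m n) = 1) :
    π.comp φ = π := by
  have hm0 : m ≠ 0 := by omega
  have hn0 : n ≠ 0 := by rintro rfl; simp at hn; omega
  have hmq : (m : ℚ) ≠ 0 := by exact_mod_cast hm0
  have hnq : (n : ℚ) ≠ 0 := by exact_mod_cast hn0
  have hrel : (φ (BSa m n))⁻¹ * φ (BSb m n) ^ m * φ (BSa m n) = φ (BSb m n) ^ n := by
    rw [← map_inv, ← map_zpow, ← map_mul, ← map_mul, BS_rel, map_zpow]
  obtain ⟨c, k, hc⟩ := conj_power m n hm hn _ _ hrel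
  have hk : k ≠ 0 := by
    rintro rfl
    rw [zpow_zero, conj_eq_one_iff] at hc
    exact b_ne_one m n hm0 hn0 (hφ (by rw [hc, map_one]))
  have hkq : (k : ℚ) ≠ 0 := by exact_mod_cast hk
  have hβ : φ (BSb m n) = c⁻¹ * BSb m n ^ k * c := by rw [← hc]; group
  apply BS_hom_ext
  · set α := c * φ (BSa m n) * c⁻¹ with hα
    have hπ : π (φ (BSa m n)) = π α := by
      rw [hα, map_mul, map_mul, map_inv, mul_inv_cancel_comm]
    have e : BSb m n ^ (k * m) * α = α * BSb m n ^ (k * n) := by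
      rw [zpow_mul, zpow_mul, ← hc, conj_zpow, conj_zpow, ← hrel, hα]
      group
    have h0 := congrArg (fun g => aff m n hm0 hn0 g 0) e
    simp only [map_mul, Equiv.Perm.mul_apply, aff_b] at h0
    have h1 := aff_sub m n hm0 hn0 π ha hb α (k * n) 0
    push_cast at h0
    rw [zero_add] at h0
    rw [← h0, add_sub_cancel_left, sub_zero] at h1
    have h2 : ((m : ℚ) / n) ^ (Multiplicative.toAdd (π α)) = ((m : ℚ) / n) ^ (1 : ℤ) := by
      rw [zpow_one, eq_div_iff hnq]
      apply mul_left_cancel₀ hkq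
      linarith
    have h3 : (|(m : ℚ) / n|) ^ (Multiplicative.toAdd (π α)) = (|(m : ℚ) / n|) ^ (1 : ℤ) := by
      rw [← abs_zpow, ← abs_zpow, h2]
    have hlt : |(m : ℚ) / n| < 1 := by
      rw [abs_div, div_lt_one (abs_pos.2 hnq)]
      have : |m| < |n| := by rwa [abs_of_pos (by omega : 0 < m)]
      exact_mod_cast this
    have h4 := zpow_right_injective₀ (abs_pos.2 (div_ne_zero hmq hnq)) hlt.ne h3
    rw [MonoidHom.comp_apply, hπ, ha, ← h4]
    rfl
  · rw [MonoidHom.comp_apply, hβ, map_mul, map_mul, map_inv, map_zpow, hb]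
    simp

end BSproof

/-- For `1 < m < |n|`, every injective endomorphism of `B(m,n)` has infinitely many
twisted conjugacy classes; in particular, the induced endomorphism on the quotient `ℤ`
of the sequence `0 → K → B(m,n) → ℤ → 1` given by the `a`-exponent sum is the
identity. -/
theorem BS_m_n_injective_reidemeister_infinite (m n : ℤ) (hm : 1 < m) (hn : m < |n|)
    (φ : BS m n →* BS m n) (hφ : Function.Injective φ) :
    Infinite (Quot (twistedConj φ)) ∧
      ∀ π : BS m n →* Multiplicative ℤ,
        π (BSa m n) = Multiplicative.ofAdd 1 → π (BSb m n) = 1 →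
          π.comp φ = π := by
  refine ⟨?_, fun π ha hb => BSproof.induced m n hm hn φ hφ π ha hb⟩
  let π : BS m n →* Multiplicative ℤ :=
    BSproof.BSlift m n (Multiplicative.ofAdd 1) 1 (by simp)
  have ha : π (BSa m n) = Multiplicative.ofAdd 1 := BSproof.BSlift_a _ _ _ _ _
  have hb : π (BSb m n) = 1 := BSproof.BSlift_b _ _ _ _ _
  have hπ := BSproof.induced m n hm hn φ hφ π ha hb
  let F : Quot (twistedConj φ) → Multiplicative ℤ := Quot.lift π (by
    rintro x y ⟨γ, rfl⟩
    have : π (φ γ) = π γ := DFunLike.congr_fun hπ γ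
    rw [map_mul, map_mul, map_inv, this, mul_inv_cancel_comm])
  refine Infinite.of_surjective F ?_
  intro z
  refine ⟨Quot.mk _ (BSa m n ^ Multiplicative.toAdd z), ?_⟩
  change π (BSa m n ^ Multiplicative.toAdd z) = z
  rw [map_zpow, ha, ← ofAdd_zsmul]
  simp
end
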